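/- arXiv:2311.07018 — 2 statements merged into one kernel-verified Lean document; each statement's English description precedes it below -/
import Mathlib

section
/- Let n ∈ ℕ, t ≥ 0 and K ∈ ℝ. Let A : [t,∞) → ℝ^{n×n} be measurable and satisfy the dissipation condition with constant κ ∈ ℝ where K < κ, let b ∈ L^{2,K}(t,∞;ℝ^n), and let x : [t,∞) → ℝ^n be locally absolutely continuous with x'(s) = A(s)x(s) + b(s) for almost every s ≥ t. Then x ∈ L^{2,K}(t,∞;ℝ^n), and for every ε ∈ (0, 2κ − 2K) one has (−2K + 2κ − ε) ∫_t^∞ e^{2Ks}|x(s)|² ds ≤ e^{2Kt}|x(t)|² + (1/ε) ∫_t^∞ e^{2Ks}|b(s)|² ds. -/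
open MeasureTheory Matrix

theorem AbsolutelyContinuousOnInterval.congr_on {X : Type*} [PseudoMetricSpace X]
    {f g : ℝ → X} {a b : ℝ} (hf : AbsolutelyContinuousOnInterval f a b)
    (hfg : Set.EqOn f g (Set.uIcc a b)) : AbsolutelyContinuousOnInterval g a b := by
  rw [absolutelyContinuousOnInterval_iff] at hf ⊢
  intro ε hε
  obtain ⟨δ, hδ, h⟩ := hf ε hε
  refine ⟨δ, hδ, fun E hE hEδ => ?_⟩
  have hsum : ∑ i ∈ Finset.range E.1, dist (g (E.2 i).1) (g (E.2 i).2)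
      = ∑ i ∈ Finset.range E.1, dist (f (E.2 i).1) (f (E.2 i).2) :=
    Finset.sum_congr rfl fun i hi => by
      rw [hfg (hE.1 i hi).1, hfg (hE.1 i hi).2]
  rw [hsum]
  exact h E hE hEδ

theorem AbsolutelyContinuousOnInterval.finset_sum {ι F : Type*} [SeminormedAddCommGroup F]
    {f : ι → ℝ → F} {a b : ℝ} (u : Finset ι)
    (hf : ∀ i ∈ u, AbsolutelyContinuousOnInterval (f i) a b) :
    AbsolutelyContinuousOnInterval (fun s => ∑ i ∈ u, f i s) a b := by
  classical
  induction u using Finset.induction_on with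
  | empty =>
    simpa using (LipschitzWith.const (0 : F)).lipschitzOnWith.absolutelyContinuousOnInterval
  | insert i u hi ih =>
    simp only [Finset.sum_insert hi]
    exact (hf i (by simp)).add (ih fun j hj => hf j (by simp [hj]))

theorem absolutelyContinuousOnInterval_const_add_integral {g : ℝ → ℝ} {t T : ℝ} (c : ℝ)
    (hg : IntervalIntegrable g volume t T) :
    AbsolutelyContinuousOnInterval (fun s => c + ∫ r in t..s, g r) t T :=
  (LipschitzWith.const c).lipschitzOnWith.absolutelyContinuousOnInterval.add
    (hg.absolutelyContinuousOnInterval_intervalIntegral (by simp))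

/-- The energy identity in differential form for a weighted squared norm of a primitive. -/
theorem absolutelyContinuous_and_hasDerivAt_weighted_dotProduct {n : ℕ} {t T : ℝ} (c : ℝ)
    (y₀ : Fin n → ℝ) {g y : ℝ → Fin n → ℝ} (hg : IntervalIntegrable g volume t T)
    (hy : ∀ s, y s = y₀ + ∫ r in t..s, g r) :
    AbsolutelyContinuousOnInterval (fun s => Real.exp (c * s) * (y s ⬝ᵥ y s)) t T ∧
    ∀ᵐ s, s ∈ Set.uIcc t T → HasDerivAt (fun s => Real.exp (c * s) * (y s ⬝ᵥ y s))
      (Real.exp (c * s) * (c * (y s ⬝ᵥ y s) + 2 * (g s ⬝ᵥ y s))) s := by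
  constructor
  · refine AbsolutelyContinuousOnInterval.fun_mul ?_ ?_
    · refine ContDiffOn.absolutelyContinuousOnInterval (ContDiff.contDiffOn ?_)
      fun_prop
    · refine AbsolutelyContinuousOnInterval.finset_sum _ fun i _ => ?_
      have hcoord : IntervalIntegrable (fun r => g r i) volume t T :=
        ⟨hg.1.eval i, hg.2.eval i⟩
      have hAC : AbsolutelyContinuousOnInterval (fun s => y₀ i + ∫ r in t..s, g r i) t T :=
        absolutelyContinuousOnInterval_const_add_integral _ hcoord
      have hyi : Set.EqOn (fun s => y₀ i + ∫ r in t..s, g r i) (fun s => y s i)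
          (Set.uIcc t T) := by
        intro s hs
        have hgs : IntervalIntegrable g volume t s :=
          hg.mono_set (Set.uIcc_subset_uIcc_left hs)
        have := (ContinuousLinearMap.proj (R := ℝ) (φ := fun _ : Fin n => ℝ)
          i).intervalIntegral_comp_comm hgs
        simp only [ContinuousLinearMap.proj_apply] at this
        simp [hy, this]
      have hACy := hAC.congr_on hyi
      exact hACy.fun_mul hACy
  · filter_upwards [hg.ae_hasDerivAt_integral] with s hs hsT
    have hder : HasDerivAt y (g s) s := by
      rw [funext hy]
      exact (hs hsT t (by simp)).const_add y₀
    have hexp : HasDerivAt (fun s => Real.exp (c * s)) (Real.exp (c * s) * c) s := by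
      simpa using ((hasDerivAt_id s).const_mul c).exp
    have hdot : HasDerivAt (fun s => y s ⬝ᵥ y s) (∑ i, (g s i * y s i + y s i * g s i)) s :=
      HasDerivAt.fun_sum fun i _ => (hasDerivAt_pi.1 hder i).mul (hasDerivAt_pi.1 hder i)
    have hsum : ∑ i, (g s i * y s i + y s i * g s i) = 2 * (g s ⬝ᵥ y s) := by
      rw [dotProduct, Finset.mul_sum]
      exact Finset.sum_congr rfl fun i _ => by ring
    rw [hsum] at hdot
    exact (hexp.mul hdot).congr_deriv (by ring)

theorem Matrix.add_transpose_mulVec_dotProduct_self {n : ℕ} (M : Matrix (Fin n) (Fin n) ℝ)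
    (v : Fin n → ℝ) : ((M + Mᵀ) *ᵥ v) ⬝ᵥ v = 2 * ((M *ᵥ v) ⬝ᵥ v) := by
  rw [add_mulVec, add_dotProduct, mulVec_transpose, ← dotProduct_mulVec,
    dotProduct_comm v]
  ring

theorem Matrix.two_mul_dotProduct_le {n : ℕ} (u v : Fin n → ℝ) {ε : ℝ} (hε : 0 < ε) :
    2 * (u ⬝ᵥ v) ≤ (1 / ε) * (u ⬝ᵥ u) + ε * (v ⬝ᵥ v) := by
  simp only [dotProduct, Finset.mul_sum, ← Finset.sum_add_distrib]
  refine Finset.sum_le_sum fun i _ => ?_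
  have h : 0 ≤ (1 / ε) * (u i - ε * v i) ^ 2 := by positivity
  have he : (1 / ε) * (u i - ε * v i) ^ 2
      = (1 / ε) * (u i * u i) + ε * (v i * v i) - 2 * (u i * v i) := by
    field_simp
    ring
  linarith

theorem Matrix.dotProduct_self_nonneg_real {n : ℕ} (v : Fin n → ℝ) : 0 ≤ v ⬝ᵥ v :=
  Finset.sum_nonneg fun i _ => mul_self_nonneg (v i)

/-- The weighted energy estimate on a bounded interval. -/
theorem weighted_energy_estimate_interval {n : ℕ} {t T K κ ε : ℝ} (htT : t ≤ T) (hε : 0 < ε)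
    {A : ℝ → Matrix (Fin n) (Fin n) ℝ} {b y : ℝ → Fin n → ℝ} (y₀ : Fin n → ℝ)
    (hdiss : ∀ᵐ s ∂(volume.restrict (Set.Ici t)),
      ∀ v : Fin n → ℝ, ((A s + (A s)ᵀ) *ᵥ v) ⬝ᵥ v ≤ -2 * κ * (v ⬝ᵥ v))
    (hb : IntegrableOn (fun s => Real.exp (2*K*s) * (b s ⬝ᵥ b s)) (Set.Ici t))
    {g : ℝ → Fin n → ℝ} (hg : IntervalIntegrable g volume t T)
    (hgA : ∀ s, t ≤ s → g s = A s *ᵥ y s + b s)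
    (hy : ∀ s, y s = y₀ + ∫ r in t..s, g r) :
    IntervalIntegrable (fun s => Real.exp (2*K*s) * (y s ⬝ᵥ y s)) volume t T ∧
    (-2*K + 2*κ - ε) * ∫ s in t..T, Real.exp (2*K*s) * (y s ⬝ᵥ y s)
      ≤ Real.exp (2*K*t) * (y t ⬝ᵥ y t)
        + (1/ε) * ∫ s in Set.Ici t, Real.exp (2*K*s) * (b s ⬝ᵥ b s) := by
  obtain ⟨hAC, hder⟩ := absolutelyContinuous_and_hasDerivAt_weighted_dotProduct (2*K) y₀ hg hy
  have hyint : IntervalIntegrable (fun s => Real.exp (2*K*s) * (y s ⬝ᵥ y s)) volume t T :=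
    hAC.continuousOn.intervalIntegrable
  have hbint : IntervalIntegrable (fun s => Real.exp (2*K*s) * (b s ⬝ᵥ b s)) volume t T :=
    (intervalIntegrable_iff_integrableOn_Icc_of_le htT).2 (hb.mono_set Set.Icc_subset_Ici_self)
  refine ⟨hyint, ?_⟩
  have hpt : ∀ᵐ s ∂(volume.restrict (Set.Icc t T)),
      deriv (fun s => Real.exp (2*K*s) * (y s ⬝ᵥ y s)) s
        ≤ (1/ε) * (Real.exp (2*K*s) * (b s ⬝ᵥ b s))
          - (-2*K + 2*κ - ε) * (Real.exp (2*K*s) * (y s ⬝ᵥ y s)) := by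
    have hdissT := ae_restrict_of_ae_restrict_of_subset
      (Set.Icc_subset_Ici_self : Set.Icc t T ⊆ Set.Ici t) hdiss
    filter_upwards [hdissT, ae_restrict_of_ae hder, ae_restrict_mem measurableSet_Icc]
      with s hs hders hsT
    rw [(hders (Set.uIcc_of_le htT ▸ hsT)).deriv, hgA s hsT.1, add_dotProduct]
    have hA := hs (y s)
    rw [add_transpose_mulVec_dotProduct_self] at hA
    have hyoung := two_mul_dotProduct_le (b s) (y s) hε
    have hmul := mul_le_mul_of_nonneg_left (add_le_add hA hyoung) (Real.exp_pos (2*K*s)).le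
    linarith
  have hmono := intervalIntegral.integral_mono_ae_restrict htT hAC.intervalIntegrable_deriv
    ((hbint.const_mul (1/ε)).sub (hyint.const_mul (-2*K + 2*κ - ε))) hpt
  rw [hAC.integral_deriv_eq_sub, intervalIntegral.integral_sub (hbint.const_mul _)
    (hyint.const_mul _), intervalIntegral.integral_const_mul,
    intervalIntegral.integral_const_mul] at hmono
  have hble : ∫ s in t..T, Real.exp (2*K*s) * (b s ⬝ᵥ b s)
      ≤ ∫ s in Set.Ici t, Real.exp (2*K*s) * (b s ⬝ᵥ b s) := by
    rw [intervalIntegral.integral_of_le htT]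
    refine setIntegral_mono_set hb (ae_of_all _ fun s => ?_)
      (Set.Ioc_subset_Icc_self.trans Set.Icc_subset_Ici_self).eventuallyLE
    exact mul_nonneg (Real.exp_pos _).le (dotProduct_self_nonneg_real _)
  have hble' := mul_le_mul_of_nonneg_left hble (one_div_pos.2 hε).le
  have hT : 0 ≤ Real.exp (2*K*T) * (y T ⬝ᵥ y T) :=
    mul_nonneg (Real.exp_pos _).le (dotProduct_self_nonneg_real _)
  linarith

/-- Deterministic global integrability result underlying Lemma 2.2:
if `A` satisfies the dissipation condition with constant `κ > K` and
`b ∈ L^{2,K}(t,∞)`, then any locally absolutely continuous solution of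
`x' = A x + b` on `[t,∞)` belongs to `L^{2,K}(t,∞)` and satisfies the
weighted energy estimate for every `ε ∈ (0, 2κ - 2K)`. -/
theorem stmt_1 (n : ℕ) (t K κ : ℝ) (ht : 0 ≤ t) (hK : K < κ)
    (A : ℝ → Matrix (Fin n) (Fin n) ℝ) (b x : ℝ → (Fin n → ℝ))
    (hA : ∀ i j, Measurable fun s => A s i j)
    (hb : Measurable b)
    (hdiss : ∀ᵐ s ∂(volume.restrict (Set.Ici t)),
      ∀ v : Fin n → ℝ, ((A s + (A s)ᵀ) *ᵥ v) ⬝ᵥ v ≤ -2 * κ * (v ⬝ᵥ v))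
    (hbL2 : IntegrableOn (fun s => Real.exp (2*K*s) * (b s ⬝ᵥ b s)) (Set.Ici t))
    (hint : ∀ T, t ≤ T → IntegrableOn (fun s => A s *ᵥ x s + b s) (Set.Icc t T))
    (hx : ∀ s, t ≤ s → x s = x t + ∫ r in t..s, (A r *ᵥ x r + b r)) :
    IntegrableOn (fun s => Real.exp (2*K*s) * (x s ⬝ᵥ x s)) (Set.Ici t) ∧
    ∀ ε, 0 < ε → ε < 2*κ - 2*K →
      (-2*K + 2*κ - ε) * ∫ s in Set.Ici t, Real.exp (2*K*s) * (x s ⬝ᵥ x s)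
        ≤ Real.exp (2*K*t) * (x t ⬝ᵥ x t)
          + (1/ε) * ∫ s in Set.Ici t, Real.exp (2*K*s) * (b s ⬝ᵥ b s) := by
  have hlocal : ∀ ε, 0 < ε → ∀ T, t ≤ T →
      IntervalIntegrable (fun s => Real.exp (2*K*s) * (x s ⬝ᵥ x s)) volume t T ∧
      (-2*K + 2*κ - ε) * ∫ s in t..T, Real.exp (2*K*s) * (x s ⬝ᵥ x s)
        ≤ Real.exp (2*K*t) * (x t ⬝ᵥ x t)
          + (1/ε) * ∫ s in Set.Ici t, Real.exp (2*K*s) * (b s ⬝ᵥ b s) := by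
    intro ε hε T hT
    set y : ℝ → Fin n → ℝ := fun s => x t + ∫ r in t..s, (A r *ᵥ x r + b r)
    have hxy : ∀ s, t ≤ s → x s = y s := hx
    obtain ⟨hyint, hyle⟩ := weighted_energy_estimate_interval (y := y) hT hε (x t) hdiss hbL2
      ((intervalIntegrable_iff_integrableOn_Icc_of_le hT).2 (hint T hT))
      (fun s hs => by rw [hxy s hs]) (fun _ => rfl)
    have hcongr : Set.EqOn (fun s => Real.exp (2*K*s) * (y s ⬝ᵥ y s))
        (fun s => Real.exp (2*K*s) * (x s ⬝ᵥ x s)) (Set.uIcc t T) := by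
      intro s hs
      rw [Set.uIcc_of_le hT] at hs
      simp only [hxy s hs.1]
    rw [intervalIntegral.integral_congr hcongr, ← hxy t le_rfl] at hyle
    exact ⟨hyint.congr (hcongr.mono Set.uIoc_subset_uIcc), hyle⟩
  have hnonneg : ∀ s, 0 ≤ Real.exp (2*K*s) * (x s ⬝ᵥ x s) := fun s =>
    mul_nonneg (Real.exp_pos _).le (dotProduct_self_nonneg_real _)
  have hIoi : IntegrableOn (fun s => Real.exp (2*K*s) * (x s ⬝ᵥ x s)) (Set.Ioi t) := by
    have hδ : 0 < κ - K := sub_pos.2 hK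
    refine integrableOn_Ioi_of_intervalIntegral_norm_bounded (l := Filter.atTop)
      (b := fun T => max t T)
      ((Real.exp (2*K*t) * (x t ⬝ᵥ x t)
        + (1/(κ - K)) * ∫ s in Set.Ici t, Real.exp (2*K*s) * (b s ⬝ᵥ b s)) / (κ - K)) t
      (fun T => (hlocal 1 one_pos _ (le_max_left t T)).1.1)
      (Filter.tendsto_atTop_mono (fun T => le_max_right t T) Filter.tendsto_id)
      (Filter.Eventually.of_forall fun T => ?_)
    simp only [Real.norm_of_nonneg (hnonneg _)]
    rw [le_div_iff₀ hδ]
    have hle := (hlocal (κ - K) hδ _ (le_max_left t T)).2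
    linarith
  refine ⟨integrableOn_Ici_iff_integrableOn_Ioi enorm_ne_top |>.2 hIoi, fun ε hε _ => ?_⟩
  have hlim := (intervalIntegral_tendsto_integral_Ioi t hIoi Filter.tendsto_id).const_mul
    (-2*K + 2*κ - ε)
  rw [integral_Ici_eq_integral_Ioi (f := fun s => Real.exp (2*K*s) * (x s ⬝ᵥ x s))]
  exact le_of_tendsto hlim ((Filter.eventually_ge_atTop t).mono fun T hT =>
    (hlocal ε hε T hT).2)
end

section
/- Let n, m ∈ ℕ, t ≥ 0, K ∈ ℝ. Let A : [t,∞) → ℝ^{n×n}, B : [t,∞) → ℝ^{n×m}, Q : [t,∞) → Sym_n(ℝ), S : [t,∞) → ℝ^{m×n}, R : [t,∞) → Sym_m(ℝ) be measurable with uniformly bounded operator norms, and suppose there is δ > 0 such that R(s) ⪰ δI_m and Q(s) − S(s)ᵀ R(s)^{-1} S(s) ⪰ 0 for almost every s. Call u ∈ L^{2,K}(t,∞;ℝ^m) admissible; for x_t ∈ ℝ^n and admissible u let x_u denote the unique locally absolutely continuous solution of x' = A x + B u on [t,∞) with x_u(t) = x_t, and assume x_u ∈ L^{2,K}(t,∞;ℝ^n)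 for every admissible u. Define J(u) = (1/2) ∫_t^∞ e^{2Ks} ( ⟨Q(s)x_u(s), x_u(s)⟩ + 2⟨S(s)x_u(s), u(s)⟩ + ⟨R(s)u(s), u(s)⟩ ) ds. Let u* be admissible, x* = x_{u*}, and let y* : [t,∞) → ℝ^n be locally absolutely continuous with y*'(s) = −((2K)I + A(s))ᵀ y*(s) − Q(s)x*(s) − S(s)ᵀ u*(s) for almost every s and y* ∈ L^{2,K}(t,∞;ℝ^n). Then u* minimizes J over all admissible controls if and only if B(s)ᵀ y*(s) + S(s)x*(s) + R(s)u*(s) = 0 for almost every s ≥ t; moreover, in that case u* is the unique minimizer of J (up to almost-everywhere equality). -/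
open MeasureTheory Matrix

/-- A control `u` is admissible if it is measurable and lies in the weighted
space `L^{2,K}(t,∞;ℝ^m)`. -/
def Adm (t K : ℝ) {m : ℕ} (u : ℝ → (Fin m → ℝ)) : Prop :=
  Measurable u ∧
  MeasureTheory.IntegrableOn (fun s => Real.exp (2*K*s) * (u s ⬝ᵥ u s)) (Set.Ici t)

/-- `x` is the (locally absolutely continuous) state trajectory on `[t,∞)`
associated with the control `u`, the initial state `xt`, and the dynamics
`x' = A x + B u`. -/
def IsState (t : ℝ) {n m : ℕ} (A : ℝ → Matrix (Fin n) (Fin n) ℝ)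
    (B : ℝ → Matrix (Fin n) (Fin m) ℝ) (xt : Fin n → ℝ)
    (u : ℝ → (Fin m → ℝ)) (x : ℝ → (Fin n → ℝ)) : Prop :=
  x t = xt ∧
  (∀ T, t ≤ T →
    MeasureTheory.IntegrableOn (fun s => A s *ᵥ x s + B s *ᵥ u s) (Set.Icc t T)) ∧
  ∀ s, t ≤ s → x s = xt + ∫ r in t..s, (A r *ᵥ x r + B r *ᵥ u r)

/-- The infinite-horizon quadratic cost functional
`J(u) = (1/2)∫_t^∞ e^{2Ks}(⟨Qx,x⟩ + 2⟨Sx,u⟩ + ⟨Ru,u⟩) ds` evaluated along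
the trajectory `x`. -/
noncomputable def Jcost (t K : ℝ) {n m : ℕ} (Q : ℝ → Matrix (Fin n) (Fin n) ℝ)
    (S : ℝ → Matrix (Fin m) (Fin n) ℝ) (R : ℝ → Matrix (Fin m) (Fin m) ℝ)
    (x : ℝ → (Fin n → ℝ)) (u : ℝ → (Fin m → ℝ)) : ℝ :=
  (1/2) * ∫ s in Set.Ici t, Real.exp (2*K*s) *
    (((Q s *ᵥ x s) ⬝ᵥ x s) + 2 * ((S s *ᵥ x s) ⬝ᵥ u s) + ((R s *ᵥ u s) ⬝ᵥ u s))


/-- `f` is a primitive of the locally integrable function `f'` on `[t, ∞)`. -/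
def IsPrimitiveFrom {E : Type*} [NormedAddCommGroup E] [NormedSpace ℝ E] (t : ℝ)
    (f f' : ℝ → E) : Prop :=
  (∀ T, t ≤ T → IntervalIntegrable f' volume t T) ∧
    ∀ s, t ≤ s → f s = f t + ∫ r in t..s, f' r

namespace IsPrimitiveFrom

section Vector

variable {E : Type*} [NormedAddCommGroup E] [NormedSpace ℝ E] {t : ℝ} {f f' g g' : ℝ → E}

theorem add (hf : IsPrimitiveFrom t f f') (hg : IsPrimitiveFrom t g g') :
    IsPrimitiveFrom t (fun s => f s + g s) (fun s => f' s + g' s) := by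
  refine ⟨fun T hT => (hf.1 T hT).add (hg.1 T hT), fun s hs => ?_⟩
  simp only [intervalIntegral.integral_add (hf.1 s hs) (hg.1 s hs), hf.2 s hs, hg.2 s hs]
  abel

theorem const_smul (c : ℝ) (hf : IsPrimitiveFrom t f f') :
    IsPrimitiveFrom t (fun s => c • f s) (fun s => c • f' s) := by
  refine ⟨fun T hT => (hf.1 T hT).smul c, fun s hs => ?_⟩
  simp only [intervalIntegral.integral_smul, hf.2 s hs, smul_add]

theorem sub (hf : IsPrimitiveFrom t f f') (hg : IsPrimitiveFrom t g g') :
    IsPrimitiveFrom t (fun s => f s - g s) (fun s => f' s - g' s) := by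
  simpa [sub_eq_add_neg] using hf.add (hg.const_smul (-1))

theorem continuousOn (hf : IsPrimitiveFrom t f f') : ContinuousOn f (Set.Ici t) := by
  intro x hx
  have hx : t ≤ x := hx
  have hxT : t ≤ x + 1 := by linarith
  have h1 : ContinuousOn f (Set.Icc t (x + 1)) := by
    have := intervalIntegral.continuousOn_primitive_interval' (hf.1 (x + 1) hxT)
      (Set.left_mem_uIcc)
    rw [Set.uIcc_of_le hxT] at this
    exact (continuousOn_const.add this).congr fun s hs => hf.2 s hs.1
  refine (h1 x ⟨hx, by linarith⟩).mono_of_mem_nhdsWithin ?_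
  rw [← Set.Ici_inter_Iic]
  exact Filter.inter_mem self_mem_nhdsWithin
    (mem_nhdsWithin_of_mem_nhds (Iic_mem_nhds (by linarith)))

theorem aestronglyMeasurable [SecondCountableTopology E] (hf : IsPrimitiveFrom t f f') :
    AEStronglyMeasurable f (volume.restrict (Set.Ici t)) :=
  hf.continuousOn.aestronglyMeasurable measurableSet_Ici

theorem congr_deriv (hf : IsPrimitiveFrom t f f')
    (h : ∀ s, f' s = g' s) : IsPrimitiveFrom t f g' := by
  obtain rfl : f' = g' := funext h
  exact hf

end Vector

section Scalar

variable {t : ℝ} {f f' g g' : ℝ → ℝ}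

theorem mul (hf : IsPrimitiveFrom t f f') (hg : IsPrimitiveFrom t g g') :
    IsPrimitiveFrom t (fun s => f s * g s) (fun s => f' s * g s + f s * g' s) := by
  refine ⟨fun T hT => ?_, fun T hT => ?_⟩
  · have hsub : Set.uIcc t T ⊆ Set.Ici t := by
      rw [Set.uIcc_of_le hT]; exact Set.Icc_subset_Ici_self
    exact ((hf.1 T hT).mul_continuousOn (hg.continuousOn.mono hsub)).add
      ((hg.1 T hT).continuousOn_mul (hf.continuousOn.mono hsub))
  · have ac : ∀ {h h' : ℝ → ℝ}, IsPrimitiveFrom t h h' →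
        AbsolutelyContinuousOnInterval (fun s => h t + ∫ r in t..s, h' r) t T := by
      intro h h' hh
      refine AbsolutelyContinuousOnInterval.add ?_
        ((hh.1 T hT).absolutelyContinuousOnInterval_intervalIntegral (by simp))
      exact ((LipschitzWith.const (h t)).lipschitzOnWith
        (s := Set.uIcc t T)).absolutelyContinuousOnInterval
    have key := (ac hf).integral_deriv_mul_eq_sub (ac hg)
    rw [← hf.2 T hT, ← hg.2 T hT] at key
    simp only [intervalIntegral.integral_same, add_zero] at key
    rw [← sub_eq_iff_eq_add', ← key]
    apply intervalIntegral.integral_congr_ae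
    filter_upwards [(hf.1 T hT).ae_hasDerivAt_integral, (hg.1 T hT).ae_hasDerivAt_integral]
      with s h1 h2 hs
    have hs' := Set.uIoc_subset_uIcc hs
    rw [Set.uIoc_of_le hT] at hs
    rw [((h1 hs' t (by simp)).const_add (f t)).deriv, ((h2 hs' t (by simp)).const_add (g t)).deriv,
      ← hf.2 s hs.1.le, ← hg.2 s hs.1.le]

theorem exp_mul (c : ℝ) :
    IsPrimitiveFrom t (fun s => Real.exp (c * s)) (fun s => c * Real.exp (c * s)) := by
  have hint : ∀ T, IntervalIntegrable (fun s => c * Real.exp (c * s)) volume t T :=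
    fun T => Continuous.intervalIntegrable (by fun_prop) t T
  refine ⟨fun T _ => hint T, fun T _ => ?_⟩
  rw [intervalIntegral.integral_eq_sub_of_hasDerivAt (f := fun s => Real.exp (c * s)) ?_ (hint T)]
  · ring
  · intro s _
    simpa [mul_comm] using ((hasDerivAt_id s).const_mul c).exp

theorem sum {ι : Type*} (a : Finset ι) {F F' : ι → ℝ → ℝ}
    (h : ∀ i ∈ a, IsPrimitiveFrom t (F i) (F' i)) :
    IsPrimitiveFrom t (fun s => ∑ i ∈ a, F i s) (fun s => ∑ i ∈ a, F' i s) := by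
  refine ⟨fun T hT => by
    simpa [Finset.sum_fn] using IntervalIntegrable.sum a fun i hi => (h i hi).1 T hT, fun s hs => ?_⟩
  rw [intervalIntegral.integral_finsetSum fun i hi => (h i hi).1 s hs, ← Finset.sum_add_distrib]
  exact Finset.sum_congr rfl fun i hi => (h i hi).2 s hs

theorem eval {k : ℕ} {p p' : ℝ → Fin k → ℝ} (h : IsPrimitiveFrom t p p') (i : Fin k) :
    IsPrimitiveFrom t (fun s => p s i) (fun s => p' s i) := by
  let φ : (Fin k → ℝ) →L[ℝ] ℝ := ContinuousLinearMap.proj i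
  have hint : ∀ T, t ≤ T → IntervalIntegrable (fun s => p' s i) volume t T := by
    intro T hT
    rw [intervalIntegrable_iff_integrableOn_Ioc_of_le hT]
    exact φ.integrable_comp ((intervalIntegrable_iff_integrableOn_Ioc_of_le hT).1 (h.1 T hT))
  refine ⟨hint, fun s hs => ?_⟩
  have := φ.intervalIntegral_comp_comm (h.1 s hs)
  have h2 := congrArg φ (h.2 s hs)
  rw [map_add, ← this] at h2
  exact h2

theorem dotProduct {k : ℕ} {p p' q q' : ℝ → Fin k → ℝ} (hp : IsPrimitiveFrom t p p')
    (hq : IsPrimitiveFrom t q q') :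
    IsPrimitiveFrom t (fun s => p s ⬝ᵥ q s) (fun s => p' s ⬝ᵥ q s + p s ⬝ᵥ q' s) := by
  have := sum Finset.univ fun i _ => (hp.eval i).mul (hq.eval i)
  simpa [_root_.dotProduct, Finset.sum_add_distrib] using this

/-- The derivative of an integrable locally absolutely continuous function integrates to the
opposite of the initial value. -/
theorem integral_deriv_eq_neg (hf : IsPrimitiveFrom t f f') (hfi : IntegrableOn f (Set.Ici t))
    (hfi' : IntegrableOn f' (Set.Ici t)) : ∫ s in Set.Ici t, f' s = -f t := by
  have h1 := intervalIntegral_tendsto_integral_Ioi t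
    (hfi'.mono_set Set.Ioi_subset_Ici_self) Filter.tendsto_id
  have h2 : Filter.Tendsto f Filter.atTop (nhds (f t + ∫ s in Set.Ioi t, f' s)) := by
    refine (h1.const_add (f t)).congr' ?_
    filter_upwards [Filter.eventually_ge_atTop t] with s hs
    exact (hf.2 s hs).symm
  have h3 := IntegrableAtFilter.eq_zero_of_tendsto
    (⟨Set.Ici t, Filter.mem_atTop t, hfi⟩ : IntegrableAtFilter f Filter.atTop volume) (by
      intro s hs
      rcases Filter.mem_atTop_sets.1 hs with ⟨b, hb⟩
      rw [← top_le_iff, ← Real.volume_Ici (a := b)]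
      exact measure_mono hb) h2
  rw [integral_Ici_eq_integral_Ioi]
  linarith

/-- A nonnegative function with `f t = 0` and `f' ≤ C f` vanishes on `[t, ∞)`. -/
theorem eq_zero_of_deriv_le {C : ℝ} (hf : IsPrimitiveFrom t f f') (h0 : f t = 0)
    (hnonneg : ∀ s, 0 ≤ f s)
    (hle : ∀ᵐ s ∂(volume.restrict (Set.Ici t)), f' s ≤ C * f s) {s : ℝ} (hs : t ≤ s) :
    f s = 0 := by
  have hP := (exp_mul (t := t) (-C)).mul hf
  have h1 := hP.2 s hs
  simp only [h0, mul_zero, zero_add] at h1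
  have h2 : ∫ r in t..s, (-C * Real.exp (-C * r) * f r + Real.exp (-C * r) * f' r) ≤ 0 := by
    rw [intervalIntegral.integral_of_le hs]
    refine integral_nonpos_of_ae ?_
    filter_upwards [ae_restrict_of_ae_restrict_of_subset
      (Set.Ioc_subset_Ioi_self.trans Set.Ioi_subset_Ici_self) hle] with r hr
    have := mul_le_mul_of_nonneg_left hr (Real.exp_pos (-C * r)).le
    simp only [Pi.zero_apply]
    linarith
  rw [← h1] at h2
  exact le_antisymm (nonpos_of_mul_nonpos_right h2 (Real.exp_pos _)) (hnonneg s)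

end Scalar

end IsPrimitiveFrom

theorem Matrix.dotProduct_self_nonneg_real_s7 {k : ℕ} (a : Fin k → ℝ) : 0 ≤ a ⬝ᵥ a :=
  Finset.sum_nonneg fun i _ => mul_self_nonneg (a i)

theorem Matrix.two_mul_dotProduct_le_s7 {k : ℕ} (a b : Fin k → ℝ) :
    2 * (a ⬝ᵥ b) ≤ a ⬝ᵥ a + b ⬝ᵥ b := by
  have := dotProduct_self_nonneg_real_s7 (a - b)
  simp only [sub_dotProduct, dotProduct_sub] at this
  rw [dotProduct_comm b a] at this
  linarith

theorem Matrix.abs_dotProduct_le {k : ℕ} (a b : Fin k → ℝ) :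
    |a ⬝ᵥ b| ≤ a ⬝ᵥ a + b ⬝ᵥ b := by
  have h1 := two_mul_dotProduct_le_s7 a b
  have h2 := two_mul_dotProduct_le_s7 a (-b)
  simp only [dotProduct_neg, neg_dotProduct, neg_neg] at h2
  have := dotProduct_self_nonneg_real_s7 a
  have := dotProduct_self_nonneg_real_s7 b
  rw [abs_le]
  constructor <;> linarith

/-- A bound on the operator norm of a matrix passes to its transpose. -/
theorem Matrix.transpose_mulVec_bound {k l : ℕ} {L : ℝ} {M : Matrix (Fin k) (Fin l) ℝ}
    (h : ∀ v : Fin l → ℝ, (M *ᵥ v) ⬝ᵥ (M *ᵥ v) ≤ L ^ 2 * (v ⬝ᵥ v)) (y : Fin k → ℝ) :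
    (Mᵀ *ᵥ y) ⬝ᵥ (Mᵀ *ᵥ y) ≤ L ^ 2 * (y ⬝ᵥ y) := by
  set c := (Mᵀ *ᵥ y) ⬝ᵥ (Mᵀ *ᵥ y) with hc
  have hMM := h (Mᵀ *ᵥ y)
  have hcy : c = y ⬝ᵥ (M *ᵥ (Mᵀ *ᵥ y)) := by
    rw [hc, dotProduct_mulVec y, ← mulVec_transpose]
  have h1 := two_mul_dotProduct_le_s7 (L ^ 2 • y) (M *ᵥ (Mᵀ *ᵥ y))
  simp only [smul_dotProduct, dotProduct_smul, smul_eq_mul, ← hcy] at h1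
  rw [← hc] at hMM
  rcases eq_or_ne L 0 with rfl | hL
  · have h2 := two_mul_dotProduct_le_s7 y (M *ᵥ (Mᵀ *ᵥ y))
    have h0 := dotProduct_self_nonneg_real_s7 (M *ᵥ (Mᵀ *ᵥ y))
    have h3 : M *ᵥ (Mᵀ *ᵥ y) = 0 := dotProduct_self_eq_zero.1 (by linarith)
    rw [hcy, h3]
    simp
  · have hL2 : 0 < L ^ 2 := by positivity
    refine le_of_mul_le_mul_left ?_ hL2
    linarith

/-- `f` is square integrable with respect to the measure `μ` with weight `e`. -/
def WeightedL2 (μ : Measure ℝ) (e : ℝ → ℝ) {k : ℕ} (f : ℝ → Fin k → ℝ) : Prop :=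
  AEStronglyMeasurable f μ ∧ Integrable (fun s => e s * (f s ⬝ᵥ f s)) μ

namespace WeightedL2

variable {μ : Measure ℝ} {e : ℝ → ℝ} {k l : ℕ} {f g : ℝ → Fin k → ℝ}

theorem aestronglyMeasurable_dotProduct (he : Measurable e) (hf : AEStronglyMeasurable f μ)
    (hg : AEStronglyMeasurable g μ) :
    AEStronglyMeasurable (fun s => e s * (f s ⬝ᵥ g s)) μ := by
  refine he.aestronglyMeasurable.mul (AEMeasurable.aestronglyMeasurable ?_)
  exact Finset.aemeasurable_fun_sum _ fun i _ =>
    (aemeasurable_pi_iff.1 hf.aemeasurable i).mul (aemeasurable_pi_iff.1 hg.aemeasurable i)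

theorem integrable_dotProduct (he : Measurable e) (hpos : ∀ s, 0 < e s)
    (hf : WeightedL2 μ e f) (hg : WeightedL2 μ e g) :
    Integrable (fun s => e s * (f s ⬝ᵥ g s)) μ := by
  refine (hf.2.add hg.2).mono' (aestronglyMeasurable_dotProduct he hf.1 hg.1)
    (Filter.Eventually.of_forall fun s => ?_)
  rw [Real.norm_eq_abs, abs_mul, abs_of_pos (hpos s), Pi.add_apply, ← mul_add]
  exact mul_le_mul_of_nonneg_left (abs_dotProduct_le _ _) (hpos s).le

theorem add (he : Measurable e) (hpos : ∀ s, 0 < e s)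
    (hf : WeightedL2 μ e f) (hg : WeightedL2 μ e g) : WeightedL2 μ e (fun s => f s + g s) := by
  refine ⟨hf.1.add hg.1, ?_⟩
  refine ((hf.2.add hg.2).add ((hf.integrable_dotProduct he hpos hg).const_mul 2)).congr
    (Filter.Eventually.of_forall fun s => ?_)
  simp only [Pi.add_apply, add_dotProduct, dotProduct_add, dotProduct_comm (g s) (f s)]
  ring

theorem const_smul (c : ℝ) (hf : WeightedL2 μ e f) : WeightedL2 μ e (fun s => c • f s) := by
  refine ⟨hf.1.const_smul c, ?_⟩
  convert hf.2.const_mul (c ^ 2) using 2 with s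
  simp only [smul_dotProduct, dotProduct_smul, smul_eq_mul]
  ring

theorem sub (he : Measurable e) (hpos : ∀ s, 0 < e s)
    (hf : WeightedL2 μ e f) (hg : WeightedL2 μ e g) : WeightedL2 μ e (fun s => f s - g s) := by
  simpa [sub_eq_add_neg] using hf.add he hpos (hg.const_smul (-1))

theorem mulVec {L : ℝ} {M : ℝ → Matrix (Fin l) (Fin k) ℝ} (he : Measurable e)
    (hpos : ∀ s, 0 < e s) (hM : ∀ i j, Measurable fun s => M s i j)
    (hL : ∀ᵐ s ∂μ, ∀ v : Fin k → ℝ, (M s *ᵥ v) ⬝ᵥ (M s *ᵥ v) ≤ L ^ 2 * (v ⬝ᵥ v))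
    (hf : WeightedL2 μ e f) : WeightedL2 μ e (fun s => M s *ᵥ f s) := by
  have hmeas : AEStronglyMeasurable (fun s => M s *ᵥ f s) μ := by
    refine AEMeasurable.aestronglyMeasurable (aemeasurable_pi_iff.2 fun i => ?_)
    exact Finset.aemeasurable_fun_sum Finset.univ fun j _ =>
      (hM i j).aemeasurable.mul (aemeasurable_pi_iff.1 hf.1.aemeasurable j)
  refine ⟨hmeas, (hf.2.const_mul (L ^ 2)).mono' (aestronglyMeasurable_dotProduct he hmeas hmeas) ?_⟩
  filter_upwards [hL] with s hs
  rw [Real.norm_eq_abs, abs_mul, abs_of_pos (hpos s), abs_of_nonneg (dotProduct_self_nonneg_real_s7 _),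
    mul_left_comm]
  exact mul_le_mul_of_nonneg_left (hs _) (hpos s).le

/-- A weighted square integrable function with zero norm vanishes almost everywhere. -/
theorem ae_eq_zero (hpos : ∀ s, 0 < e s) (hf : WeightedL2 μ e f)
    (h : ∫ s, e s * (f s ⬝ᵥ f s) ∂μ = 0) : ∀ᵐ s ∂μ, f s = 0 := by
  rw [integral_eq_zero_iff_of_nonneg
    (fun s => mul_nonneg (hpos s).le (dotProduct_self_nonneg_real_s7 _)) hf.2] at h
  filter_upwards [h] with s hs
  exact dotProduct_self_eq_zero.1 ((mul_eq_zero.1 hs).resolve_left (hpos s).ne')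

end WeightedL2

/-- Completion of squares: if `R ⪰ δ I` and the Schur complement of `R` is positive semidefinite,
then the block quadratic form is nonnegative, and it only vanishes where the second argument is
controlled by the first. -/
theorem Matrix.block_quadratic_form_nonneg {n m : ℕ} {δ : ℝ} (hδ : 0 < δ)
    {Q : Matrix (Fin n) (Fin n) ℝ} {S : Matrix (Fin m) (Fin n) ℝ} {R : Matrix (Fin m) (Fin m) ℝ}
    (hRsym : Rᵀ = R) (hRpd : ∀ v : Fin m → ℝ, δ * (v ⬝ᵥ v) ≤ (R *ᵥ v) ⬝ᵥ v)
    (hPD : ∀ v : Fin n → ℝ, 0 ≤ ((Q - Sᵀ * R⁻¹ * S) *ᵥ v) ⬝ᵥ v)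
    (z : Fin n → ℝ) (v : Fin m → ℝ) :
    0 ≤ ((Q *ᵥ z) ⬝ᵥ z) + 2 * ((S *ᵥ z) ⬝ᵥ v) + ((R *ᵥ v) ⬝ᵥ v) ∧
    (((Q *ᵥ z) ⬝ᵥ z) + 2 * ((S *ᵥ z) ⬝ᵥ v) + ((R *ᵥ v) ⬝ᵥ v) = 0 →
      δ ^ 2 * (v ⬝ᵥ v) ≤ (S *ᵥ z) ⬝ᵥ (S *ᵥ z)) := by
  have hunit : IsUnit R := by
    rw [← mulVec_injective_iff_isUnit]
    refine (injective_iff_map_eq_zero (Matrix.mulVecLin R)).2 fun v hv => ?_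
    have hv' : R *ᵥ v = 0 := hv
    have h := hRpd v
    rw [hv', zero_dotProduct] at h
    have h0 := dotProduct_self_nonneg_real_s7 v
    exact dotProduct_self_eq_zero.1 (le_antisymm (nonpos_of_mul_nonpos_right h hδ) h0)
  have hdet : IsUnit R.det := (isUnit_iff_isUnit_det R).1 hunit
  set b := S *ᵥ z with hb
  set a := R⁻¹ *ᵥ b with ha
  have hRa : R *ᵥ a = b := by
    rw [ha, mulVec_mulVec, mul_nonsing_inv _ hdet, one_mulVec]
  have hsymm : ∀ p q : Fin m → ℝ, (R *ᵥ p) ⬝ᵥ q = (R *ᵥ q) ⬝ᵥ p := fun p q => by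
    rw [dotProduct_comm, dotProduct_mulVec, ← mulVec_transpose, hRsym]
  have hschur : ((Q - Sᵀ * R⁻¹ * S) *ᵥ z) ⬝ᵥ z = (Q *ᵥ z) ⬝ᵥ z - a ⬝ᵥ b := by
    rw [sub_mulVec, sub_dotProduct, ← mulVec_mulVec, ← mulVec_mulVec, ← hb, ← ha,
      mulVec_transpose, ← dotProduct_mulVec, ← hb]
  have hsq : (R *ᵥ (v + a)) ⬝ᵥ (v + a) = (R *ᵥ v) ⬝ᵥ v + 2 * (b ⬝ᵥ v) + a ⬝ᵥ b := by
    rw [mulVec_add, add_dotProduct, dotProduct_add, dotProduct_add, hsymm v a, hRa,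
      dotProduct_comm b a]
    ring
  have h1 := hPD z
  have h2 := hRpd (v + a)
  have h3 := dotProduct_self_nonneg_real_s7 (v + a)
  rw [hschur] at h1
  rw [hsq] at h2
  refine ⟨by nlinarith, fun h0 => ?_⟩
  have h4 : v + a = 0 :=
    dotProduct_self_eq_zero.1 (le_antisymm (nonpos_of_mul_nonpos_right (by linarith) hδ) h3)
  have h5 : R *ᵥ v = -b := by
    rw [eq_neg_of_add_eq_zero_left h4, mulVec_neg, hRa]
  have h6 := hRpd v
  rw [h5, neg_dotProduct] at h6
  have h7 := two_mul_dotProduct_le_s7 (δ • v) (-b)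
  simp only [smul_dotProduct, dotProduct_smul, smul_eq_mul, dotProduct_neg, neg_dotProduct,
    neg_neg] at h7
  rw [dotProduct_comm v b] at h7
  have h8 := mul_le_mul_of_nonneg_left h6 hδ.le
  nlinarith

section LinearQuadratic

variable {n m : ℕ} {t K L : ℝ} {A : ℝ → Matrix (Fin n) (Fin n) ℝ}
  {B : ℝ → Matrix (Fin n) (Fin m) ℝ} {Q : ℝ → Matrix (Fin n) (Fin n) ℝ}
  {S : ℝ → Matrix (Fin m) (Fin n) ℝ} {R : ℝ → Matrix (Fin m) (Fin m) ℝ}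

theorem IsState.isPrimitiveFrom {xt : Fin n → ℝ} {u : ℝ → Fin m → ℝ} {x : ℝ → Fin n → ℝ}
    (h : IsState t A B xt u x) : IsPrimitiveFrom t x (fun s => A s *ᵥ x s + B s *ᵥ u s) := by
  refine ⟨fun T hT => ?_, fun s hs => ?_⟩
  · rw [intervalIntegrable_iff_integrableOn_Icc_of_le hT]
    exact h.2.1 T hT
  · rw [h.1]
    exact h.2.2 s hs

theorem IsPrimitiveFrom.isState {xt : Fin n → ℝ} {u : ℝ → Fin m → ℝ} {x : ℝ → Fin n → ℝ}
    (h : IsPrimitiveFrom t x (fun s => A s *ᵥ x s + B s *ᵥ u s)) (h0 : x t = xt) :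
    IsState t A B xt u x := by
  refine ⟨h0, fun T hT => ?_, fun s hs => ?_⟩
  · rw [← intervalIntegrable_iff_integrableOn_Icc_of_le hT]
    exact h.1 T hT
  · rw [← h0]
    exact h.2 s hs

theorem integrable_cost {x : ℝ → Fin n → ℝ} {u : ℝ → Fin m → ℝ} {μ : Measure ℝ} {e : ℝ → ℝ}
    (he : Measurable e) (hpos : ∀ s, 0 < e s)
    (hx : WeightedL2 μ e x) (hu : WeightedL2 μ e u)
    (hQx : WeightedL2 μ e fun s => Q s *ᵥ x s) (hSx : WeightedL2 μ e fun s => S s *ᵥ x s)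
    (hRu : WeightedL2 μ e fun s => R s *ᵥ u s) :
    Integrable (fun s => e s *
      (((Q s *ᵥ x s) ⬝ᵥ x s) + 2 * ((S s *ᵥ x s) ⬝ᵥ u s) + ((R s *ᵥ u s) ⬝ᵥ u s))) μ := by
  refine (((hQx.integrable_dotProduct he hpos hx).add
    ((hSx.integrable_dotProduct he hpos hu).const_mul 2)).add
    (hRu.integrable_dotProduct he hpos hu)).congr (Filter.Eventually.of_forall fun s => ?_)
  simp only [Pi.add_apply]
  ring

theorem Jcost_const_smul (ε : ℝ) (x : ℝ → Fin n → ℝ) (u : ℝ → Fin m → ℝ) :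
    Jcost t K Q S R (fun s => ε • x s) (fun s => ε • u s) = ε ^ 2 * Jcost t K Q S R x u := by
  unfold Jcost
  rw [mul_left_comm, ← integral_const_mul (ε ^ 2)]
  congr 1
  refine integral_congr_ae (Filter.Eventually.of_forall fun s => ?_)
  simp only [mulVec_smul, smul_dotProduct, dotProduct_smul, smul_eq_mul]
  ring

theorem Jcost_congr {x x' : ℝ → Fin n → ℝ} {u u' : ℝ → Fin m → ℝ}
    (hx : ∀ s, t ≤ s → x s = x' s) (hu : ∀ s, t ≤ s → u s = u' s) :
    Jcost t K Q S R x u = Jcost t K Q S R x' u' := by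
  unfold Jcost
  congr 1
  refine setIntegral_congr_fun measurableSet_Ici fun s hs => ?_
  simp only [hx s hs, hu s hs]

/-- Duality between the variational equation and the adjoint equation. -/
theorem integral_adjoint_pairing {y z : ℝ → Fin n → ℝ} {p : ℝ → Fin n → ℝ} {v : ℝ → Fin m → ℝ}
    {μ : Measure ℝ} {e : ℝ → ℝ} (hμ : μ = volume.restrict (Set.Ici t))
    (hee : e = fun s => Real.exp (2 * K * s))
    (hy : WeightedL2 μ e y) (hz : WeightedL2 μ e z)
    (hp : Integrable (fun s => e s * (p s ⬝ᵥ z s)) μ)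
    (hBv : WeightedL2 μ e fun s => B s *ᵥ v s)
    (hyP : IsPrimitiveFrom t y (fun s =>
      -((((2 * K) • (1 : Matrix (Fin n) (Fin n) ℝ) + A s)ᵀ) *ᵥ y s) - p s))
    (hzP : IsPrimitiveFrom t z (fun s => A s *ᵥ z s + B s *ᵥ v s)) (hz0 : z t = 0) :
    ∫ s, e s * (p s ⬝ᵥ z s) ∂μ = ∫ s, e s * (y s ⬝ᵥ (B s *ᵥ v s)) ∂μ := by
  have he : Measurable e := by rw [hee]; fun_prop
  have hpos : ∀ s, 0 < e s := by rw [hee]; exact fun s => Real.exp_pos _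
  have hyB := hy.integrable_dotProduct he hpos hBv
  have hP : IsPrimitiveFrom t (fun s => e s * (y s ⬝ᵥ z s))
      (fun s => e s * (y s ⬝ᵥ (B s *ᵥ v s)) - e s * (p s ⬝ᵥ z s)) := by
    rw [hee]
    refine ((IsPrimitiveFrom.exp_mul (2 * K)).mul (hyP.dotProduct hzP)).congr_deriv fun s => ?_
    have h1 : ((A s)ᵀ *ᵥ y s) ⬝ᵥ z s = y s ⬝ᵥ (A s *ᵥ z s) := by
      rw [mulVec_transpose, dotProduct_mulVec]
    simp only [transpose_add, transpose_smul, transpose_one, add_mulVec, smul_mulVec, one_mulVec,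
      sub_dotProduct, neg_dotProduct, add_dotProduct, smul_dotProduct, smul_eq_mul,
      dotProduct_add, h1]
    ring
  have hint := hy.integrable_dotProduct he hpos hz
  subst hμ
  have h := hP.integral_deriv_eq_neg hint (hyB.sub hp)
  rw [integral_sub hyB hp, hz0, dotProduct_zero, mul_zero, neg_zero] at h
  linarith

/-- Second-order expansion of the cost around a reference pair, with the linear term expressed
through the adjoint state. -/
theorem Jcost_expansion
    {x xs y : ℝ → Fin n → ℝ} {u us : ℝ → Fin m → ℝ}
    {μ : Measure ℝ} {e : ℝ → ℝ} (hμ : μ = volume.restrict (Set.Ici t))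
    (hee : e = fun s => Real.exp (2 * K * s))
    (hB : ∀ i j, Measurable fun s => B s i j)
    (hQ : ∀ i j, Measurable fun s => Q s i j)
    (hS : ∀ i j, Measurable fun s => S s i j)
    (hR : ∀ i j, Measurable fun s => R s i j)
    (hQsym : ∀ᵐ s ∂μ, (Q s)ᵀ = Q s)
    (hRsym : ∀ᵐ s ∂μ, (R s)ᵀ = R s)
    (hBL : ∀ᵐ s ∂μ, ∀ v : Fin m → ℝ, (B s *ᵥ v) ⬝ᵥ (B s *ᵥ v) ≤ L ^ 2 * (v ⬝ᵥ v))
    (hQL : ∀ᵐ s ∂μ, ∀ v : Fin n → ℝ, (Q s *ᵥ v) ⬝ᵥ (Q s *ᵥ v) ≤ L ^ 2 * (v ⬝ᵥ v))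
    (hSL : ∀ᵐ s ∂μ, ∀ v : Fin n → ℝ, (S s *ᵥ v) ⬝ᵥ (S s *ᵥ v) ≤ L ^ 2 * (v ⬝ᵥ v))
    (hRL : ∀ᵐ s ∂μ, ∀ v : Fin m → ℝ, (R s *ᵥ v) ⬝ᵥ (R s *ᵥ v) ≤ L ^ 2 * (v ⬝ᵥ v))
    (hx : WeightedL2 μ e x) (hxs : WeightedL2 μ e xs) (hy : WeightedL2 μ e y)
    (hu : WeightedL2 μ e u) (hus : WeightedL2 μ e us)
    (hxP : IsPrimitiveFrom t x (fun s => A s *ᵥ x s + B s *ᵥ u s))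
    (hxsP : IsPrimitiveFrom t xs (fun s => A s *ᵥ xs s + B s *ᵥ us s)) (hx0 : x t = xs t)
    (hyP : IsPrimitiveFrom t y (fun s =>
      -((((2 * K) • (1 : Matrix (Fin n) (Fin n) ℝ) + A s)ᵀ) *ᵥ y s)
        - Q s *ᵥ xs s - (S s)ᵀ *ᵥ us s)) :
    Jcost t K Q S R x u = Jcost t K Q S R xs us
      + Jcost t K Q S R (fun s => x s - xs s) (fun s => u s - us s)
      + ∫ s, e s * (((B s)ᵀ *ᵥ y s + S s *ᵥ xs s + R s *ᵥ us s) ⬝ᵥ (u s - us s)) ∂μ := by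
  have he : Measurable e := by rw [hee]; fun_prop
  have hpos : ∀ s, 0 < e s := by rw [hee]; exact fun s => Real.exp_pos _
  have hz := hx.sub he hpos hxs
  have hv := hu.sub he hpos hus
  have hzP : IsPrimitiveFrom t (fun s => x s - xs s)
      (fun s => A s *ᵥ (x s - xs s) + B s *ᵥ (u s - us s)) := by
    refine (hxP.sub hxsP).congr_deriv fun s => ?_
    rw [mulVec_sub, mulVec_sub]
    abel
  have hQxs := hxs.mulVec he hpos hQ hQL
  have hSxs := hxs.mulVec he hpos hS hSL
  have hRus := hus.mulVec he hpos hR hRL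
  have hST := hus.mulVec (M := fun s => (S s)ᵀ) he hpos (fun i j => hS j i)
    (hSL.mono fun s h => transpose_mulVec_bound h)
  have hBT := hy.mulVec (M := fun s => (B s)ᵀ) he hpos (fun i j => hB j i)
    (hBL.mono fun s h => transpose_mulVec_bound h)
  have hp := hQxs.add he hpos hST
  have hw := (hBT.add he hpos hSxs).add he hpos hRus
  have hpz := hp.integrable_dotProduct he hpos hz
  have hBv := hv.mulVec he hpos hB hBL
  have hpair := integral_adjoint_pairing hμ hee hy hz hpz hBv
    (hyP.congr_deriv fun s => by rw [sub_sub]) hzP (by simp [hx0])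
  have hyB := hy.integrable_dotProduct he hpos hBv
  have hwv := hw.integrable_dotProduct he hpos hv
  have hq0 := integrable_cost he hpos hxs hus hQxs hSxs hRus
  have hq1 := integrable_cost he hpos hz hv (hz.mulVec he hpos hQ hQL)
    (hz.mulVec he hpos hS hSL) (hv.mulVec he hpos hR hRL)
  have hpt : ∀ᵐ s ∂μ, e s *
      (((Q s *ᵥ x s) ⬝ᵥ x s) + 2 * ((S s *ᵥ x s) ⬝ᵥ u s) + ((R s *ᵥ u s) ⬝ᵥ u s)) =
      e s * (((Q s *ᵥ xs s) ⬝ᵥ xs s) + 2 * ((S s *ᵥ xs s) ⬝ᵥ us s) + ((R s *ᵥ us s) ⬝ᵥ us s))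
      + e s * (((Q s *ᵥ (x s - xs s)) ⬝ᵥ (x s - xs s))
        + 2 * ((S s *ᵥ (x s - xs s)) ⬝ᵥ (u s - us s))
        + ((R s *ᵥ (u s - us s)) ⬝ᵥ (u s - us s)))
      + 2 * (e s * (((B s)ᵀ *ᵥ y s + S s *ᵥ xs s + R s *ᵥ us s) ⬝ᵥ (u s - us s)))
      + 2 * (e s * ((Q s *ᵥ xs s + (S s)ᵀ *ᵥ us s) ⬝ᵥ (x s - xs s))
        - e s * (y s ⬝ᵥ (B s *ᵥ (u s - us s)))) := by
    filter_upwards [hQsym, hRsym] with s hQs hRs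
    have hQc : (Q s *ᵥ x s) ⬝ᵥ xs s = (Q s *ᵥ xs s) ⬝ᵥ x s := by
      rw [dotProduct_comm, dotProduct_mulVec, ← mulVec_transpose, hQs]
    have hRc : (R s *ᵥ u s) ⬝ᵥ us s = (R s *ᵥ us s) ⬝ᵥ u s := by
      rw [dotProduct_comm, dotProduct_mulVec, ← mulVec_transpose, hRs]
    have hBc : ∀ w, ((B s)ᵀ *ᵥ y s) ⬝ᵥ w = y s ⬝ᵥ (B s *ᵥ w) := fun w => by
      rw [mulVec_transpose, dotProduct_mulVec]
    have hSc : ∀ w, ((S s)ᵀ *ᵥ us s) ⬝ᵥ w = (S s *ᵥ w) ⬝ᵥ us s := fun w => by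
      rw [mulVec_transpose, ← dotProduct_mulVec, dotProduct_comm]
    simp only [add_dotProduct, hBc, hSc]
    simp only [mulVec_sub, sub_dotProduct, dotProduct_sub, hQc, hRc]
    ring
  have hint := integral_congr_ae hpt
  rw [integral_add ((hq0.fun_add hq1).fun_add (hwv.const_mul 2)) ((show Integrable (fun _ => _ - _) μ from hpz.sub hyB).const_mul 2),
    integral_add (hq0.fun_add hq1) (hwv.const_mul 2), integral_add hq0 hq1,
    integral_const_mul, integral_const_mul, integral_sub hpz hyB, hpair, sub_self, mul_zero,
    add_zero] at hint
  unfold Jcost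
  subst hμ hee
  rw [hint]
  ring

end LinearQuadratic

/-- Deterministic component of Lemma 3.2: under the positive definiteness
condition (PD), an admissible control `u*` minimizes the cost `J` over all
admissible controls if and only if the stationarity condition
`Bᵀ y* + S x* + R u* = 0` holds a.e., where `y*` solves the adjoint equation;
and in that case the minimizer is unique up to a.e. equality. -/
theorem stmt_7 (n m : ℕ) (t K δ : ℝ) (ht : 0 ≤ t) (hδ : 0 < δ)
    (A : ℝ → Matrix (Fin n) (Fin n) ℝ) (B : ℝ → Matrix (Fin n) (Fin m) ℝ)
    (Q : ℝ → Matrix (Fin n) (Fin n) ℝ) (S : ℝ → Matrix (Fin m) (Fin n) ℝ)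
    (R : ℝ → Matrix (Fin m) (Fin m) ℝ)
    (hA : ∀ i j, Measurable fun s => A s i j)
    (hB : ∀ i j, Measurable fun s => B s i j)
    (hQ : ∀ i j, Measurable fun s => Q s i j)
    (hS : ∀ i j, Measurable fun s => S s i j)
    (hR : ∀ i j, Measurable fun s => R s i j)
    (hQsym : ∀ᵐ s ∂(volume.restrict (Set.Ici t)), (Q s)ᵀ = Q s)
    (hRsym : ∀ᵐ s ∂(volume.restrict (Set.Ici t)), (R s)ᵀ = R s)
    (hbd : ∃ L : ℝ, ∀ᵐ s ∂(volume.restrict (Set.Ici t)),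
      (∀ v : Fin n → ℝ, (A s *ᵥ v) ⬝ᵥ (A s *ᵥ v) ≤ L^2 * (v ⬝ᵥ v)) ∧
      (∀ v : Fin m → ℝ, (B s *ᵥ v) ⬝ᵥ (B s *ᵥ v) ≤ L^2 * (v ⬝ᵥ v)) ∧
      (∀ v : Fin n → ℝ, (Q s *ᵥ v) ⬝ᵥ (Q s *ᵥ v) ≤ L^2 * (v ⬝ᵥ v)) ∧
      (∀ v : Fin n → ℝ, (S s *ᵥ v) ⬝ᵥ (S s *ᵥ v) ≤ L^2 * (v ⬝ᵥ v)) ∧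
      (∀ v : Fin m → ℝ, (R s *ᵥ v) ⬝ᵥ (R s *ᵥ v) ≤ L^2 * (v ⬝ᵥ v)))
    (hRpd : ∀ᵐ s ∂(volume.restrict (Set.Ici t)),
      ∀ v : Fin m → ℝ, δ * (v ⬝ᵥ v) ≤ (R s *ᵥ v) ⬝ᵥ v)
    (hPD : ∀ᵐ s ∂(volume.restrict (Set.Ici t)),
      ∀ v : Fin n → ℝ, 0 ≤ ((Q s - (S s)ᵀ * (R s)⁻¹ * S s) *ᵥ v) ⬝ᵥ v)
    (xt : Fin n → ℝ)
    (X : (ℝ → (Fin m → ℝ)) → ℝ → (Fin n → ℝ))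
    (hX : ∀ u, Adm t K u → IsState t A B xt u (X u) ∧
      MeasureTheory.IntegrableOn
        (fun s => Real.exp (2*K*s) * (X u s ⬝ᵥ X u s)) (Set.Ici t))
    (hXuniq : ∀ u x', Adm t K u → IsState t A B xt u x' →
      MeasureTheory.IntegrableOn
        (fun s => Real.exp (2*K*s) * (x' s ⬝ᵥ x' s)) (Set.Ici t) →
      ∀ s, t ≤ s → x' s = X u s)
    (ustar : ℝ → (Fin m → ℝ)) (hustar : Adm t K ustar)
    (ystar : ℝ → (Fin n → ℝ))
    (hyint : ∀ T, t ≤ T → MeasureTheory.IntegrableOn (fun s =>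
      -((((2*K) • (1 : Matrix (Fin n) (Fin n) ℝ) + A s)ᵀ) *ᵥ ystar s)
        - Q s *ᵥ X ustar s - (S s)ᵀ *ᵥ ustar s) (Set.Icc t T))
    (hyeq : ∀ s, t ≤ s → ystar s = ystar t + ∫ r in t..s,
      (-((((2*K) • (1 : Matrix (Fin n) (Fin n) ℝ) + A r)ᵀ) *ᵥ ystar r)
        - Q r *ᵥ X ustar r - (S r)ᵀ *ᵥ ustar r))
    (hyL2 : MeasureTheory.IntegrableOn
      (fun s => Real.exp (2*K*s) * (ystar s ⬝ᵥ ystar s)) (Set.Ici t)) :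
    ((∀ u, Adm t K u →
        Jcost t K Q S R (X ustar) ustar ≤ Jcost t K Q S R (X u) u) ↔
      (∀ᵐ s ∂(volume.restrict (Set.Ici t)),
        (B s)ᵀ *ᵥ ystar s + S s *ᵥ X ustar s + R s *ᵥ ustar s = 0)) ∧
    ((∀ u, Adm t K u →
        Jcost t K Q S R (X ustar) ustar ≤ Jcost t K Q S R (X u) u) →
      ∀ u, Adm t K u → Jcost t K Q S R (X u) u = Jcost t K Q S R (X ustar) ustar →
        u =ᵐ[volume.restrict (Set.Ici t)] ustar) := by
  obtain ⟨L, hL⟩ := hbd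
  set μ : Measure ℝ := volume.restrict (Set.Ici t) with hμ
  obtain ⟨e, hee⟩ : ∃ e : ℝ → ℝ, e = fun s => Real.exp (2 * K * s) := ⟨_, rfl⟩
  have he : Measurable e := by rw [hee]; fun_prop
  have hpos : ∀ s, 0 < e s := by rw [hee]; exact fun s => Real.exp_pos _
  have hAL := hL.mono fun s h => h.1
  have hBL := hL.mono fun s h => h.2.1
  have hQL := hL.mono fun s h => h.2.2.1
  have hSL := hL.mono fun s h => h.2.2.2.1
  have hRL := hL.mono fun s h => h.2.2.2.2
  have hyP : IsPrimitiveFrom t ystar (fun s =>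
      -((((2 * K) • (1 : Matrix (Fin n) (Fin n) ℝ) + A s)ᵀ) *ᵥ ystar s)
        - Q s *ᵥ X ustar s - (S s)ᵀ *ᵥ ustar s) :=
    ⟨fun T hT => (intervalIntegrable_iff_integrableOn_Icc_of_le hT).2 (hyint T hT), hyeq⟩
  have hy : WeightedL2 μ e ystar := ⟨hyP.aestronglyMeasurable, by rw [hee]; exact hyL2⟩
  have hXP := fun u (hu : Adm t K u) => (hX u hu).1.isPrimitiveFrom
  have hXt : ∀ u, Adm t K u → X u t = xt := fun u hu => (hX u hu).1.1
  have hXL : ∀ u, Adm t K u → WeightedL2 μ e (X u) := fun u hu =>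
    ⟨(hXP u hu).aestronglyMeasurable, by rw [hee]; exact (hX u hu).2⟩
  have hUL : ∀ u : ℝ → Fin m → ℝ, Adm t K u → WeightedL2 μ e u := fun u hu =>
    ⟨hu.1.aestronglyMeasurable, by rw [hee]; exact hu.2⟩
  have hexp := fun u (hu : Adm t K u) =>
    Jcost_expansion hμ hee hB hQ hS hR hQsym hRsym hBL hQL hSL hRL (hXL u hu) (hXL _ hustar) hy
      (hUL u hu) (hUL _ hustar) (hXP u hu) (hXP _ hustar)
      ((hXt u hu).trans (hXt _ hustar).symm) hyP
  have hform : ∀ᵐ s ∂μ, ∀ (z : Fin n → ℝ) (v : Fin m → ℝ),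
      0 ≤ ((Q s *ᵥ z) ⬝ᵥ z) + 2 * ((S s *ᵥ z) ⬝ᵥ v) + ((R s *ᵥ v) ⬝ᵥ v) ∧
      (((Q s *ᵥ z) ⬝ᵥ z) + 2 * ((S s *ᵥ z) ⬝ᵥ v) + ((R s *ᵥ v) ⬝ᵥ v) = 0 →
        δ ^ 2 * (v ⬝ᵥ v) ≤ (S s *ᵥ z) ⬝ᵥ (S s *ᵥ z)) := by
    filter_upwards [hRsym, hRpd, hPD] with s h1 h2 h3 z v
    exact block_quadratic_form_nonneg hδ h1 h2 h3 z v
  have hform_nonneg : ∀ (z : ℝ → Fin n → ℝ) (v : ℝ → Fin m → ℝ),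
      0 ≤ᵐ[μ] fun s => Real.exp (2 * K * s) *
        (((Q s *ᵥ z s) ⬝ᵥ z s) + 2 * ((S s *ᵥ z s) ⬝ᵥ v s) + ((R s *ᵥ v s) ⬝ᵥ v s)) := by
    intro z v
    filter_upwards [hform] with s hs
    exact mul_nonneg (Real.exp_pos _).le (hs _ _).1
  have hJnonneg : ∀ (z : ℝ → Fin n → ℝ) (v : ℝ → Fin m → ℝ), 0 ≤ Jcost t K Q S R z v :=
    fun z v => mul_nonneg (by norm_num) (integral_nonneg_of_ae (hform_nonneg z v))
  have hlin : (∀ᵐ s ∂μ, (B s)ᵀ *ᵥ ystar s + S s *ᵥ X ustar s + R s *ᵥ ustar s = 0) →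
      ∀ u : ℝ → Fin m → ℝ, ∫ s, e s * (((B s)ᵀ *ᵥ ystar s + S s *ᵥ X ustar s
        + R s *ᵥ ustar s) ⬝ᵥ (u s - ustar s)) ∂μ = 0 := by
    intro hst u
    refine integral_eq_zero_of_ae ?_
    filter_upwards [hst] with s hs
    rw [hs, zero_dotProduct, mul_zero, Pi.zero_apply]
  have hnec : (∀ u, Adm t K u →
      Jcost t K Q S R (X ustar) ustar ≤ Jcost t K Q S R (X u) u) →
      ∀ᵐ s ∂μ, (B s)ᵀ *ᵥ ystar s + S s *ᵥ X ustar s + R s *ᵥ ustar s = 0 := by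
    intro hmin
    have hw : WeightedL2 μ e fun s =>
        (B s)ᵀ *ᵥ ystar s + S s *ᵥ X ustar s + R s *ᵥ ustar s :=
      ((hy.mulVec (M := fun s => (B s)ᵀ) he hpos (fun i j => hB j i)
        (hBL.mono fun s h => transpose_mulVec_bound h)).add he hpos
        ((hXL _ hustar).mulVec he hpos hS hSL)).add he hpos
        ((hUL _ hustar).mulVec he hpos hR hRL)
    set w : ℝ → Fin m → ℝ := fun s =>
      (B s)ᵀ *ᵥ ystar s + S s *ᵥ X ustar s + R s *ᵥ ustar s with hwdef
    obtain ⟨v, hvm, hwv⟩ : ∃ v : ℝ → Fin m → ℝ, Measurable v ∧ w =ᵐ[μ] v :=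
      ⟨hw.1.mk w, hw.1.stronglyMeasurable_mk.measurable, hw.1.ae_eq_mk⟩
    have hvL : WeightedL2 μ e v := ⟨hvm.aestronglyMeasurable, hw.2.congr <| by
      filter_upwards [hwv] with s hs
      rw [hs]⟩
    have hadm : ∀ ε : ℝ, Adm t K fun s => ustar s + ε • v s := fun ε => by
      refine ⟨hustar.1.add (hvm.const_smul ε), ?_⟩
      have := ((hUL _ hustar).add he hpos (hvL.const_smul ε)).2
      rw [hee] at this
      exact this
    have hadm1 : Adm t K fun s => ustar s + v s := by simpa using hadm 1
    set z : ℝ → Fin n → ℝ := fun s => X (fun s => ustar s + v s) s - X ustar s with hz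
    have hzL : WeightedL2 μ e z := (hXL _ hadm1).sub he hpos (hXL _ hustar)
    have hzP : IsPrimitiveFrom t z (fun s => A s *ᵥ z s + B s *ᵥ v s) := by
      refine ((hXP _ hadm1).sub (hXP _ hustar)).congr_deriv fun s => ?_
      simp only [hz, mulVec_sub, mulVec_add]
      abel
    have hXε : ∀ (ε : ℝ) s, t ≤ s → X ustar s + ε • z s = X (fun s => ustar s + ε • v s) s := by
      intro ε
      refine hXuniq _ (fun s => X ustar s + ε • z s) (hadm ε) ?_ ?_
      · refine IsPrimitiveFrom.isState
          (((hXP _ hustar).add (hzP.const_smul ε)).congr_deriv fun s => ?_) ?_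
        · simp only [mulVec_add, mulVec_smul, smul_add]
          abel
        · simp [hz, hXt _ hadm1, hXt _ hustar]
      · have := ((hXL _ hustar).add he hpos (hzL.const_smul ε)).2
        rw [hee] at this
        exact this
    have hquad : ∀ ε : ℝ, 0 ≤ Jcost t K Q S R z v * (ε * ε)
        + (∫ s, e s * (w s ⬝ᵥ w s) ∂μ) * ε + 0 := by
      intro ε
      have h1 := hmin _ (hadm ε)
      rw [hexp _ (hadm ε)] at h1
      have h2 : Jcost t K Q S R (fun s => X (fun s => ustar s + ε • v s) s - X ustar s)
          (fun s => ustar s + ε • v s - ustar s) = ε ^ 2 * Jcost t K Q S R z v := by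
        rw [← Jcost_const_smul]
        refine Jcost_congr (fun s hs => ?_) fun s hs => by simp
        rw [← hXε ε s hs]
        simp
      have h3 : ∫ s, e s * (w s ⬝ᵥ (ustar s + ε • v s - ustar s)) ∂μ
          = (∫ s, e s * (w s ⬝ᵥ w s) ∂μ) * ε := by
        rw [← integral_mul_const]
        refine integral_congr_ae ?_
        filter_upwards [hwv] with s hs
        rw [add_sub_cancel_left, dotProduct_smul, ← hs, smul_eq_mul]
        ring
      rw [h2, h3] at h1
      linarith
    have hdisc := discrim_le_zero hquad
    rw [discrim, mul_zero, sub_zero] at hdisc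
    exact hw.ae_eq_zero hpos (pow_eq_zero_iff two_ne_zero |>.1 (le_antisymm hdisc (sq_nonneg _)))
  refine ⟨⟨hnec, fun hst u hu => ?_⟩, fun hmin u hu heq => ?_⟩
  · rw [hexp u hu, hlin hst u]
    linarith [hJnonneg (fun s => X u s - X ustar s) (fun s => u s - ustar s)]
  · rw [hexp u hu, hlin (hnec hmin) u] at heq
    have hz := (hXL u hu).sub he hpos (hXL _ hustar)
    have hv := (hUL u hu).sub he hpos (hUL _ hustar)
    have hzP : IsPrimitiveFrom t (fun s => X u s - X ustar s)
        (fun s => A s *ᵥ (X u s - X ustar s) + B s *ᵥ (u s - ustar s)) := by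
      refine ((hXP u hu).sub (hXP _ hustar)).congr_deriv fun s => ?_
      rw [mulVec_sub, mulVec_sub]
      abel
    have hint := integrable_cost he hpos hz hv (hz.mulVec he hpos hQ hQL)
      (hz.mulVec he hpos hS hSL) (hv.mulVec he hpos hR hRL)
    have hJ0 : Jcost t K Q S R (fun s => X u s - X ustar s) (fun s => u s - ustar s) = 0 := by
      linarith
    rw [Jcost, mul_eq_zero, or_iff_right (by norm_num),
      integral_eq_zero_iff_of_nonneg_ae (hform_nonneg _ _) (by rw [hee] at hint; exact hint)] at hJ0
    have hvz : ∀ᵐ s ∂μ, δ ^ 2 * ((u s - ustar s) ⬝ᵥ (u s - ustar s)) ≤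
        L ^ 2 * ((X u s - X ustar s) ⬝ᵥ (X u s - X ustar s)) := by
      filter_upwards [hJ0, hform, hSL] with s h1 h2 h3
      exact ((h2 _ _).2 ((mul_eq_zero.1 h1).resolve_left (Real.exp_pos _).ne')).trans (h3 _)
    have hzero : ∀ s, t ≤ s → (X u s - X ustar s) ⬝ᵥ (X u s - X ustar s) = 0 := by
      intro s hs
      refine (hzP.dotProduct hzP).eq_zero_of_deriv_le (C := 2 + L ^ 2 + L ^ 2 * (L ^ 2 / δ ^ 2))
        (by simp [hXt u hu, hXt _ hustar]) (fun s => dotProduct_self_nonneg_real_s7 _) ?_ hs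
      filter_upwards [hvz, hAL, hBL] with r h1 h2 h3
      generalize X u r - X ustar r = z at *
      generalize u r - ustar r = v at *
      have h4 := two_mul_dotProduct_le_s7 z (A r *ᵥ z)
      have h5 := two_mul_dotProduct_le_s7 z (B r *ᵥ v)
      have h6 : v ⬝ᵥ v ≤ L ^ 2 / δ ^ 2 * (z ⬝ᵥ z) := by
        rw [div_mul_eq_mul_div, le_div_iff₀ (by positivity)]
        linarith
      have h7 := mul_le_mul_of_nonneg_left h6 (sq_nonneg L)
      have h8 := h2 z
      have h9 := h3 v
      rw [dotProduct_comm _ z, dotProduct_add]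
      linarith
    filter_upwards [hvz, ae_restrict_mem measurableSet_Ici] with s h1 hs
    rw [hzero s hs, mul_zero] at h1
    exact sub_eq_zero.1 (dotProduct_self_eq_zero.1 (le_antisymm
      (nonpos_of_mul_nonpos_right h1 (by positivity)) (dotProduct_self_nonneg_real_s7 _)))
end
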